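/- Let K ≥ η > λ > 1 and set θ₀ = (log η − log λ)/(log K − log λ). Then for every N ∈ ℕ and all positive real numbers c₁, …, c_N satisfying c_j ≥ K^{-1} for every 1 ≤ j ≤ N and ∏_{j=1}^{N} c_j ≤ η^{−N}, there exist a natural number ℓ ≥ θ₀·N and indices 1 ≤ n₁ < ⋯ < n_ℓ ≤ N such that for every i ∈ {1, …, ℓ} and every integer n with n_i < n ≤ N one has ∏_{j=n_i}^{n−1} c_j ≤ λ^{−(n − n_i)}. -/

import Mathlib

/-!
Put `b j = λ c_j`. The indices `n` all of whose forward products `b_n ⋯ b_{m-1}` are at most `1`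
are the ones we look for. Read the word `b_1 ⋯ b_N` from the left: at such an index peel off the
single letter `b_n ≥ λ / K`; at any other index some block `b_n ⋯ b_{m-1}` exceeds `1`, and
deleting it only decreases the product. What remains at the end has one factor `≥ λ / K` for each
good index met, so `(λ / K) ^ ℓ ≤ ∏ b_j ≤ (λ / η) ^ N`; now take logarithms.
-/

open Finset

section PlissTimes

variable {R : Type*} [CommMonoid R] [LinearOrder R]

/-- The Pliss times of the sequence `b` in the window `[k, M)`: the indices `n` such that every
product `b n * ⋯ * b (m - 1)` with `n < m ≤ M` is at most `1`. For `b j = λ * c j` these are the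
`λ`-forward hyperbolic times of `c`; absorbing `λ` into `b` makes the threshold `1` and avoids
division. -/
def plissTimes (b : ℕ → R) (k M : ℕ) : Finset ℕ :=
  {n ∈ Ico k M | ∀ m ∈ Ioc n M, ∏ j ∈ Ico n m, b j ≤ 1}

variable {b : ℕ → R} {k l M n : ℕ}

theorem mem_plissTimes :
    n ∈ plissTimes b k M ↔ n ∈ Ico k M ∧ ∀ m ∈ Ioc n M, ∏ j ∈ Ico n m, b j ≤ 1 :=
  mem_filter

theorem plissTimes_subset_of_le (hkl : k ≤ l) : plissTimes b l M ⊆ plissTimes b k M :=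
  filter_subset_filter _ (Ico_subset_Ico_left hkl)

theorem card_plissTimes_succ_lt (hk : k ∈ plissTimes b k M) :
    #(plissTimes b (k + 1) M) < #(plissTimes b k M) := by
  refine card_lt_card ((ssubset_iff_of_subset (plissTimes_subset_of_le k.le_succ)).2 ⟨k, hk, ?_⟩)
  simp [mem_plissTimes]

theorem exists_one_lt_prod_of_notMem_plissTimes (hkM : k < M) (hk : k ∉ plissTimes b k M) :
    ∃ m, k < m ∧ m ≤ M ∧ 1 < ∏ j ∈ Ico k m, b j := by
  simpa [mem_plissTimes, hkM, and_assoc] using hk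

end PlissTimes

theorem pow_card_plissTimes_le_prod {R : Type*} [CommSemiring R] [LinearOrder R] [IsOrderedRing R]
    {b : ℕ → R} {r : R} (hr₀ : 0 ≤ r) (hr₁ : r ≤ 1) (k M : ℕ) (hb : ∀ j ∈ Ico k M, r ≤ b j) :
    r ^ #(plissTimes b k M) ≤ ∏ j ∈ Ico k M, b j := by
  rcases le_or_gt M k with hMk | hkM
  · simp [plissTimes, Ico_eq_empty_of_le hMk]
  have tail_le {l : ℕ} (hkl : k < l) : r ^ #(plissTimes b l M) ≤ ∏ j ∈ Ico l M, b j :=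
    pow_card_plissTimes_le_prod hr₀ hr₁ l M fun j hj => hb j (Ico_subset_Ico_left hkl.le hj)
  by_cases hk : k ∈ plissTimes b k M
  · have hbk : r ≤ b k := hb k (left_mem_Ico.2 hkM)
    calc r ^ #(plissTimes b k M)
        ≤ r ^ (#(plissTimes b (k + 1) M) + 1) :=
          pow_le_pow_of_le_one hr₀ hr₁ (card_plissTimes_succ_lt hk)
      _ = r * r ^ #(plissTimes b (k + 1) M) := pow_succ' _ _
      _ ≤ b k * ∏ j ∈ Ico (k + 1) M, b j :=
          mul_le_mul hbk (tail_le k.lt_succ_self) (pow_nonneg hr₀ _) (hr₀.trans hbk)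
      _ = ∏ j ∈ Ico k M, b j := (prod_eq_prod_Ico_succ_bot hkM b).symm
  · obtain ⟨m, hkm, hmM, one_lt_block⟩ := exists_one_lt_prod_of_notMem_plissTimes hkM hk
    calc r ^ #(plissTimes b k M)
        ≤ r ^ #(plissTimes b m M) :=
          pow_le_pow_of_le_one hr₀ hr₁ (card_le_card (plissTimes_subset_of_le hkm.le))
      _ ≤ ∏ j ∈ Ico m M, b j := tail_le hkm
      _ ≤ (∏ j ∈ Ico k m, b j) * ∏ j ∈ Ico m M, b j :=
          le_mul_of_one_le_left ((pow_nonneg hr₀ _).trans (tail_le hkm)) one_lt_block.le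
      _ = ∏ j ∈ Ico k M, b j := prod_Ico_consecutive b hkm.le hmM
termination_by M - k

theorem prod_Ico_const_mul {M : Type*} [CommMonoid M] (x : M) (c : ℕ → M) (n m : ℕ) :
    ∏ j ∈ Ico n m, x * c j = x ^ (m - n) * ∏ j ∈ Ico n m, c j := by
  rw [prod_mul_distrib, prod_const, Nat.card_Ico]

theorem prod_le_inv_pow_of_mem_plissTimes {F : Type*} [Semifield F] [LinearOrder F]
    [IsStrictOrderedRing F] {x : F} (hx : 0 < x) {c : ℕ → F} {k M n m : ℕ}
    (hn : n ∈ plissTimes (fun j => x * c j) k M) (hm : m ∈ Ioc n M) :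
    ∏ j ∈ Ico n m, c j ≤ (x ^ (m - n))⁻¹ := by
  have prod_le_one := (mem_plissTimes.1 hn).2 m hm
  rw [prod_Ico_const_mul] at prod_le_one
  rwa [← one_div, le_div_iff₀' (pow_pos hx _)]

theorem log_sub_div_log_sub_mul_le_of_pow_le {x y z : ℝ} (hx : 0 < x) (hxy : x < y) (hz : 0 < z)
    {ℓ N : ℕ} (h : (x / y) ^ ℓ ≤ (x / z) ^ N) :
    (Real.log z - Real.log x) / (Real.log y - Real.log x) * N ≤ ℓ := by
  have hy : 0 < y := hx.trans hxy
  have log_lt : Real.log x < Real.log y := Real.log_lt_log hx hxy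
  have log_pow_le := Real.log_le_log (by positivity) h
  rw [Real.log_pow, Real.log_pow, Real.log_div hx.ne' hy.ne', Real.log_div hx.ne' hz.ne']
    at log_pow_le
  rw [div_mul_eq_mul_div, div_le_iff₀ (sub_pos.2 log_lt)]
  linarith

theorem log_sub_div_log_sub_mul_le_card_plissTimes {K η lam : ℝ} (hlam : 0 < lam) (hK : lam < K)
    (hη : 0 < η) {N : ℕ} {c : ℕ → ℝ} (hlow : ∀ j : ℕ, 1 ≤ j → j ≤ N → K⁻¹ ≤ c j)
    (hprod : ∏ j ∈ Icc 1 N, c j ≤ (η ^ N)⁻¹) :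
    (Real.log η - Real.log lam) / (Real.log K - Real.log lam) * N ≤
      #(plissTimes (fun j => lam * c j) 1 (N + 1)) := by
  have hK₀ : 0 < K := hlam.trans hK
  have ratio_le : ∀ j ∈ Ico 1 (N + 1), lam / K ≤ lam * c j := fun j hj => by
    obtain ⟨hj₁, hjN⟩ := mem_Ico.1 hj
    exact mul_le_mul_of_nonneg_left (hlow j hj₁ (Nat.le_of_lt_succ hjN)) hlam.le
  refine log_sub_div_log_sub_mul_le_of_pow_le hlam hK hη ?_
  calc (lam / K) ^ #(plissTimes (fun j => lam * c j) 1 (N + 1))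
      ≤ ∏ j ∈ Ico 1 (N + 1), lam * c j :=
        pow_card_plissTimes_le_prod (by positivity) ((div_le_one hK₀).2 hK.le) 1 (N + 1) ratio_le
    _ = lam ^ N * ∏ j ∈ Icc 1 N, c j := prod_Ico_const_mul lam c 1 (N + 1)
    _ ≤ lam ^ N * (η ^ N)⁻¹ := by gcongr
    _ = (lam / η) ^ N := by rw [div_pow, div_eq_mul_inv]

theorem exists_strictMonoOn_Icc_card_mem (s : Finset ℕ) :
    ∃ n : ℕ → ℕ, StrictMonoOn n (Set.Icc 1 #s) ∧ ∀ i ∈ Set.Icc 1 #s, n i ∈ s := by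
  have hs : {x | x ∈ s}.Finite := s.finite_toSet
  have card_eq : #hs.toFinset = #s := congrArg card s.finite_toSet_toFinset
  have pred_lt {i : ℕ} (hi : i ∈ Set.Icc 1 #s) : i - 1 < #hs.toFinset := by
    obtain ⟨one_le, le_card⟩ := hi
    omega
  refine ⟨fun i => Nat.nth (· ∈ s) (i - 1), fun i hi j hj hij => ?_, fun i hi => ?_⟩
  · exact Nat.nth_strictMonoOn hs (pred_lt hi) (pred_lt hj) (Nat.sub_lt_sub_right hi.1 hij)
  · exact Nat.nth_mem_of_lt_card hs (pred_lt hi)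

theorem pliss_lemma_multiplicative_general (K η lam : ℝ) (hlam : 0 < lam) (hK : lam < K)
    (hη : 0 < η) (N : ℕ) (c : ℕ → ℝ)
    (hlow : ∀ j : ℕ, 1 ≤ j → j ≤ N → K⁻¹ ≤ c j)
    (hprod : ∏ j ∈ Icc 1 N, c j ≤ (η ^ N)⁻¹) :
    ∃ (ℓ : ℕ) (n : ℕ → ℕ),
      ((Real.log η - Real.log lam) / (Real.log K - Real.log lam)) * (N : ℝ) ≤ (ℓ : ℝ) ∧
      (∀ i : ℕ, 1 ≤ i → i ≤ ℓ → 1 ≤ n i ∧ n i ≤ N) ∧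
      (∀ i j : ℕ, 1 ≤ i → i < j → j ≤ ℓ → n i < n j) ∧
      (∀ i : ℕ, 1 ≤ i → i ≤ ℓ → ∀ m : ℕ, n i < m → m ≤ N + 1 →
        ∏ j ∈ Ico (n i) m, c j ≤ (lam ^ (m - n i))⁻¹) := by
  obtain ⟨n, n_strictMono, n_mem⟩ :=
    exists_strictMonoOn_Icc_card_mem (plissTimes (fun j => lam * c j) 1 (N + 1))
  refine ⟨_, n, log_sub_div_log_sub_mul_le_card_plissTimes hlam hK hη hlow hprod, ?_, ?_, ?_⟩
  · intro i hi hiℓ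
    obtain ⟨one_le, lt_succ⟩ := mem_Ico.1 (mem_plissTimes.1 (n_mem i ⟨hi, hiℓ⟩)).1
    exact ⟨one_le, Nat.le_of_lt_succ lt_succ⟩
  · intro i j hi hij hjℓ
    exact n_strictMono ⟨hi, hij.le.trans hjℓ⟩ ⟨hi.trans hij.le, hjℓ⟩ hij
  · intro i hi hiℓ m hm hmN
    exact prod_le_inv_pow_of_mem_plissTimes hlam (n_mem i ⟨hi, hiℓ⟩) (mem_Ioc.2 ⟨hm, hmN⟩)

/-- **Multiplicative Pliss Lemma.**  Let `K ≥ η > λ > 1` and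
`θ₀ = (log η − log λ)/(log K − log λ)`.  For every `N ∈ ℕ` and positive reals
`c₁, …, c_N` with `c_j ≥ K⁻¹` for `1 ≤ j ≤ N` and `∏_{j=1}^N c_j ≤ η^{−N}`, there exist
`ℓ ≥ θ₀·N` and indices `1 ≤ n₁ < ⋯ < n_ℓ ≤ N` such that for every `i` and every `n` with
`n_i < n ≤ N` one has `∏_{j=n_i}^{n−1} c_j ≤ λ^{−(n − n_i)}`. -/
theorem pliss_lemma_multiplicative (K η lam : ℝ) (hK : η ≤ K) (hη : lam < η) (hlam : 1 < lam)
    (N : ℕ) (c : ℕ → ℝ)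
    (hpos : ∀ j : ℕ, 1 ≤ j → j ≤ N → 0 < c j)
    (hlow : ∀ j : ℕ, 1 ≤ j → j ≤ N → K⁻¹ ≤ c j)
    (hprod : ∏ j ∈ Finset.Icc 1 N, c j ≤ (η ^ N)⁻¹) :
    ∃ (ℓ : ℕ) (n : ℕ → ℕ),
      ((Real.log η - Real.log lam) / (Real.log K - Real.log lam)) * (N : ℝ) ≤ (ℓ : ℝ) ∧
      (∀ i : ℕ, 1 ≤ i → i ≤ ℓ → 1 ≤ n i ∧ n i ≤ N) ∧
      (∀ i j : ℕ, 1 ≤ i → i < j → j ≤ ℓ → n i < n j) ∧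
      (∀ i : ℕ, 1 ≤ i → i ≤ ℓ → ∀ m : ℕ, n i < m → m ≤ N →
        ∏ j ∈ Finset.Ico (n i) m, c j ≤ (lam ^ (m - n i))⁻¹) := by
  obtain ⟨ℓ, n, hℓ, n_mem, n_strictMono, hyp⟩ := pliss_lemma_multiplicative_general K η lam
    (by linarith) (by linarith) (by linarith) N c hlow hprod
  exact ⟨ℓ, n, hℓ, n_mem, n_strictMono, fun i hi hiℓ m hm hmN =>
    hyp i hi hiℓ m hm (hmN.trans N.le_succ)⟩
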